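/- For the edge ideal I = I(G_{n,r}), if s and t are positive integers with I^{(s)} ⊄ I^t, then s/t < 2(n - (r+1))/n. Consequently the resurgence ρ(I) = sup{ s/t : I^{(s)} ⊄ I^t } satisfies ρ(I) ≤ 2(n-(r+1))/n. -/

import Mathlib

open MvPolynomial

/-- The graph `G_{n,r}`: vertices `x_1,…,x_n` in cyclic order (indexed by `ZMod n`),
where for `i < j` the vertices `x_i, x_j` are adjacent iff `r+1 ≤ j-i ≤ n-(r+1)`. -/
def Gnr (n r : ℕ) : SimpleGraph (ZMod n) :=
  SimpleGraph.fromRel (fun i j => r + 1 ≤ j.val - i.val ∧ j.val - i.val ≤ n - (r + 1))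

/-- A vertex cover (as a finite set of vertices): meets every edge. -/
def IsVertexCover {V : Type*} (G : SimpleGraph V) (C : Finset V) : Prop :=
  ∀ ⦃a b : V⦄, G.Adj a b → a ∈ C ∨ b ∈ C

/-- A minimal vertex cover. -/
def IsMinVertexCover {V : Type*} (G : SimpleGraph V) (C : Finset V) : Prop :=
  IsVertexCover G C ∧ ∀ D ⊆ C, IsVertexCover G D → D = C

/-- The edge ideal `I(G) = (x_i x_j : {x_i,x_j} ∈ E(G))` of a graph. -/
noncomputable def edgeIdeal (k : Type*) [Field k] {V : Type*} (G : SimpleGraph V) :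
    Ideal (MvPolynomial V k) :=
  Ideal.span {p | ∃ i j : V, G.Adj i j ∧ p = X i * X j}

/-- The monomial prime ideal generated by the variables of a vertex set `C`. -/
noncomputable def coverPrime (k : Type*) [Field k] {V : Type*} (C : Finset V) :
    Ideal (MvPolynomial V k) :=
  Ideal.span ((fun i => (X i : MvPolynomial V k)) '' ↑C)

/-- The `t`-th symbolic power of the edge ideal of `G`: the intersection of the `t`-th
powers of the monomial primes corresponding to the minimal vertex covers of `G`. -/
noncomputable def symbPow (k : Type*) [Field k] {V : Type*} (G : SimpleGraph V) (t : ℕ) :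
    Ideal (MvPolynomial V k) :=
  ⨅ (C : Finset V) (_ : IsMinVertexCover G C), (coverPrime k C) ^ t

/-!
A monomial `x^m` occurring in an element of `I^{(s)}` has weight at least `s` on every vertex cover.
Averaging over the `n` covers complementary to arcs of `r + 1` consecutive vertices gives
`n s ≤ (n - (r + 1)) deg x^m`, so `s / t ≥ 2 (n - (r + 1)) / n` forces `deg x^m ≥ 2 t`, and also
`s ≥ t` because `n ≥ 2 (r + 1)`.

It remains to factor out `t` edges from `x^m`, knowing that its degree is at least `2 t` and its
weight on every cover at least `t`. After polarization this asks for a matching of `t` edges, and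
joining `deg x^m - 2 t` new vertices reduces it to a perfect matching in a graph all of whose covers
contain at least half of the vertices. Given a Tutte violator `u`, parity leaves at least two odd
components after deleting `u`, so every component misses the neighbourhood of some vertex. In
`G_{n,r}` the non-neighbours of a vertex induce a bipartite graph, hence all components are
bipartite, and `u` together with the smaller colour class of each of them is a cover with less than
half of the vertices, a contradiction.
-/

/-- `G` *has bipartite non-neighbourhoods* if for every vertex `v` the subgraph induced on the
vertices not adjacent to `v` (including `v` itself) is bipartite. Equivalently, the vertex set
of every odd cycle of `G` is dominating; this is the only property of `G_{n,r}` that the matching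
argument needs. -/
def HasBipartiteNonNbrs {V : Type*} (G : SimpleGraph V) : Prop :=
  ∀ v, (G.induce {w | ¬ G.Adj v w}).IsBipartite

/-- The join of `G` with `d` pairwise non-adjacent new vertices. In a matching the new vertices
absorb up to `d` vertices of `G`, which turns matchings of `G` of deficiency `d` into perfect
matchings. -/
def coneGraph {V : Type*} (G : SimpleGraph V) (d : ℕ) : SimpleGraph (V ⊕ Fin d) :=
  (Gᶜ ⊕g ⊤)ᶜ

section Matching

variable {V W : Type*} {G : SimpleGraph V}

namespace HasBipartiteNonNbrs

lemma comap (hG : HasBipartiteNonNbrs G) (f : W → V) : HasBipartiteNonNbrs (G.comap f) := by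
  intro w
  let φ : (G.comap f).induce {x | ¬ (G.comap f).Adj w x} →g G.induce {x | ¬ G.Adj (f w) x} :=
    ⟨fun x => ⟨f x, x.2⟩, fun h => h⟩
  exact (hG (f w)).of_hom φ

lemma isBipartite_of_not_preconnected (hG : HasBipartiteNonNbrs G) (h : ¬ G.Preconnected) :
    G.IsBipartite := by
  rw [SimpleGraph.IsBipartite, SimpleGraph.colorable_iff_forall_connectedComponent]
  intro c
  obtain ⟨v, hv⟩ : ∃ v, v ∉ c.supp := by
    by_contra! hc
    exact h fun a b => SimpleGraph.ConnectedComponent.eq.mp ((hc a).trans (hc b).symm)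
  have hnon (x : c.supp) : ¬ G.Adj v x := fun hvx =>
    hv ((SimpleGraph.ConnectedComponent.sound hvx.reachable).trans x.2)
  let φ : c.toSimpleGraph →g G.induce {w | ¬ G.Adj v w} := ⟨fun x => ⟨x, hnon x⟩, fun h => h⟩
  exact (hG v).of_hom φ

end HasBipartiteNonNbrs

lemma exists_two_mul_card_filter_add_mod_two_le (S : Finset V) (col : V → Fin 2) :
    ∃ q, 2 * (S.filter (col · = q)).card + S.card % 2 ≤ S.card := by
  have hsum : S.card = ∑ q, (S.filter (col · = q)).card :=
    Finset.card_eq_sum_card_fiberwise fun _ _ => Finset.mem_coe.mpr (Finset.mem_univ _)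
  rw [Fin.sum_univ_two] at hsum
  rcases le_total (S.filter (col · = 0)).card (S.filter (col · = 1)).card with h | h
  · exact ⟨0, by omega⟩
  · exact ⟨1, by omega⟩

lemma exists_isVertexCover_two_mul_card_add_oddComponents_le [Fintype V] (hG : G.IsBipartite) :
    ∃ D, IsVertexCover G D ∧ 2 * D.card + G.oddComponents.ncard ≤ Fintype.card V := by
  classical
  have := Fintype.ofFinite G.ConnectedComponent
  obtain ⟨col⟩ := hG
  let comp (c : G.ConnectedComponent) : Finset V := {x | G.connectedComponentMk x = c}
  -- In each component the smaller colour class is a cover of at most half of its vertices.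
  choose small hsmall using fun c => exists_two_mul_card_filter_add_mod_two_le (comp c) col
  let D : Finset V := {x | col x = small (G.connectedComponentMk x)}
  have hD : D.card = ∑ c, ((comp c).filter (col · = small c)).card := by
    rw [Finset.card_eq_sum_card_fiberwise (f := G.connectedComponentMk) (t := Finset.univ)
      fun _ _ => Finset.mem_coe.mpr (Finset.mem_univ _)]
    refine Finset.sum_congr rfl fun c _ => congrArg Finset.card ?_
    grind
  have hV : Fintype.card V = ∑ c, (comp c).card :=
    Finset.card_eq_sum_card_fiberwise fun _ _ => Finset.mem_coe.mpr (Finset.mem_univ _)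
  have hodd : G.oddComponents.ncard = ∑ c, (comp c).card % 2 := by
    have hsupp (c : G.ConnectedComponent) : c.supp.ncard = (comp c).card := by
      rw [← Set.ncard_coe_finset]
      simp [comp, SimpleGraph.ConnectedComponent.supp]
    have hfilter : G.oddComponents = ↑(Finset.univ.filter fun c => Odd (comp c).card) := by
      ext c
      simp [hsupp]
    rw [hfilter, Set.ncard_coe_finset, Finset.card_filter]
    exact Finset.sum_congr rfl fun c _ => by grind
  refine ⟨D, fun a b hab => ?_, ?_⟩
  · have hcol := col.valid hab
    have hcomp := SimpleGraph.ConnectedComponent.sound hab.reachable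
    simp only [D, Finset.mem_filter, Finset.mem_univ, true_and, hcomp]
    omega
  · rw [hD, hV, hodd, Finset.mul_sum, ← Finset.sum_add_distrib]
    exact Finset.sum_le_sum fun c _ => hsmall c

lemma add_two_le_ncard_oddComponents_of_isTutteViolator [Finite V] {u : Set V}
    (hV : Even (Nat.card V)) (hu : G.IsTutteViolator u) :
    u.ncard + 2 ≤ ((⊤ : G.Subgraph).deleteVerts u).coe.oddComponents.ncard := by
  have hpar := SimpleGraph.odd_ncard_oddComponents ((⊤ : G.Subgraph).deleteVerts u).coe
  have hcard : Nat.card ((⊤ : G.Subgraph).deleteVerts u).verts + u.ncard = Nat.card V := by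
    rw [add_comm, ← Set.ncard_add_ncard_compl u, Nat.card_coe_set_eq,
      SimpleGraph.Subgraph.deleteVerts_verts, SimpleGraph.Subgraph.verts_top,
      Set.compl_eq_univ_sdiff]
  unfold SimpleGraph.IsTutteViolator at hu
  grind

lemma coe_deleteVerts_top (u : Set V) :
    ((⊤ : G.Subgraph).deleteVerts u).coe = G.comap Subtype.val := by
  ext x y
  have hx := x.2
  have hy := y.2
  simp_all

lemma IsVertexCover.union_image_deleteVerts [DecidableEq V] {u : Finset V}
    {D : Finset ((⊤ : G.Subgraph).deleteVerts (u : Set V)).verts}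
    (hD : IsVertexCover ((⊤ : G.Subgraph).deleteVerts (u : Set V)).coe D) :
    IsVertexCover G (u ∪ D.image Subtype.val) := by
  intro a b hab
  by_cases ha : a ∈ u
  · exact Or.inl (Finset.mem_union_left _ ha)
  by_cases hb : b ∈ u
  · exact Or.inr (Finset.mem_union_left _ hb)
  have hadj : ((⊤ : G.Subgraph).deleteVerts (u : Set V)).coe.Adj
      ⟨a, by simpa using ha⟩ ⟨b, by simpa using hb⟩ := by simp [ha, hb, hab]
  exact (hD hadj).imp
    (fun h => Finset.mem_union_right _ (Finset.mem_image_of_mem Subtype.val h))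
    (fun h => Finset.mem_union_right _ (Finset.mem_image_of_mem Subtype.val h))

theorem HasBipartiteNonNbrs.exists_isPerfectMatching [Fintype V] (hG : HasBipartiteNonNbrs G)
    (hV : Even (Fintype.card V))
    (hcov : ∀ C, IsVertexCover G C → Fintype.card V ≤ 2 * C.card) :
    ∃ M : G.Subgraph, M.IsPerfectMatching := by
  classical
  rw [SimpleGraph.tutte]
  intro u hu
  lift u to Finset V using u.toFinite
  set H := ((⊤ : G.Subgraph).deleteVerts (u : Set V)).coe with hH
  have hodd : u.card + 2 ≤ H.oddComponents.ncard := by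
    rw [← Set.ncard_coe_finset]
    exact add_two_le_ncard_oddComponents_of_isTutteViolator (by rwa [Nat.card_eq_fintype_card]) hu
  have hdisc : ¬ H.Preconnected := fun hpre => by
    have := hpre.subsingleton_connectedComponent
    have := H.oddComponents.ncard_le_one_of_subsingleton
    omega
  have hbip : H.IsBipartite := by
    rw [hH, coe_deleteVerts_top] at hdisc ⊢
    exact (hG.comap _).isBipartite_of_not_preconnected hdisc
  obtain ⟨D, hD, hDcard⟩ := exists_isVertexCover_two_mul_card_add_oddComponents_le hbip
  have hHcard : Fintype.card ((⊤ : G.Subgraph).deleteVerts (u : Set V)).verts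
      = Fintype.card V - u.card := by
    rw [← Finset.card_compl, Fintype.card_of_subtype]
    simp
  have hucard := u.card_le_univ
  have hunion := (Finset.card_union_le u (D.image Subtype.val)).trans
    (Nat.add_le_add_left Finset.card_image_le _)
  have hmin := hcov _ hD.union_image_deleteVerts
  omega

section Cone

variable {d : ℕ}

@[simp]
lemma coneGraph_adj_inl_inl {a b : V} :
    (coneGraph G d).Adj (Sum.inl a) (Sum.inl b) ↔ G.Adj a b := by
  simp only [coneGraph, SimpleGraph.compl_adj, SimpleGraph.sum_adj_inl]
  grind [SimpleGraph.Adj.ne]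

@[simp]
lemma coneGraph_adj_inl_inr {a : V} {e : Fin d} :
    (coneGraph G d).Adj (Sum.inl a) (Sum.inr e) := by
  simp [coneGraph]

@[simp]
lemma coneGraph_not_adj_inr_inr {e e' : Fin d} :
    ¬ (coneGraph G d).Adj (Sum.inr e) (Sum.inr e') := by
  simp [coneGraph]

lemma HasBipartiteNonNbrs.coneGraph (hG : HasBipartiteNonNbrs G) (d : ℕ) :
    HasBipartiteNonNbrs (coneGraph G d) := by
  rintro (v | e)
  · obtain ⟨col⟩ := hG v
    refine ⟨SimpleGraph.Coloring.mk (fun x => match x with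
      | ⟨Sum.inl a, ha⟩ => col ⟨a, by simpa using ha⟩
      | ⟨Sum.inr e, he⟩ => absurd coneGraph_adj_inl_inr he) ?_⟩
    rintro ⟨a | e, ha⟩ ⟨b | e', hb⟩ hab
    · exact col.valid (by simpa using hab)
    · exact absurd coneGraph_adj_inl_inr hb
    · exact absurd coneGraph_adj_inl_inr ha
    · exact absurd coneGraph_adj_inl_inr ha
  · refine ⟨SimpleGraph.Coloring.mk (fun _ => 0) ?_⟩
    rintro ⟨a | e', ha⟩ ⟨b | e'', hb⟩ hab
    · exact absurd coneGraph_adj_inl_inr.symm ha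
    · exact absurd coneGraph_adj_inl_inr.symm ha
    · exact absurd coneGraph_adj_inl_inr.symm hb
    · exact absurd hab coneGraph_not_adj_inr_inr

lemma IsVertexCover.min_le_card_of_coneGraph [Fintype V] {t : ℕ}
    (hcov : ∀ C, IsVertexCover G C → t ≤ C.card) {D : Finset (V ⊕ Fin d)}
    (hD : IsVertexCover (coneGraph G d) D) : min (Fintype.card V) (t + d) ≤ D.card := by
  rw [← D.card_toLeft_add_card_toRight]
  by_cases hall : ∀ e, Sum.inr e ∈ D
  · have hleft : t ≤ D.toLeft.card := hcov _ fun a b hab => by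
      simpa using hD (coneGraph_adj_inl_inl.mpr hab)
    have hright : D.toRight = Finset.univ := by ext e; simp [hall]
    rw [hright, Finset.card_univ, Fintype.card_fin]
    exact (min_le_right _ _).trans (Nat.add_le_add_right hleft d)
  · obtain ⟨e, he⟩ := not_forall.mp hall
    have hleft : D.toLeft = Finset.univ := by
      ext a
      simpa using (hD (coneGraph_adj_inl_inr (a := a) (e := e))).resolve_right he
    rw [hleft, Finset.card_univ]
    exact (min_le_left _ _).trans (Nat.le_add_right _ _)

lemma exists_isMatching_of_isPerfectMatching_coneGraph [Finite V]
    {M : (coneGraph G d).Subgraph} (hM : M.IsPerfectMatching) :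
    ∃ N : G.Subgraph, N.IsMatching ∧ Nat.card V ≤ N.verts.ncard + d := by
  rw [SimpleGraph.Subgraph.isPerfectMatching_iff] at hM
  let N : G.Subgraph :=
    { verts := {a | ∃ b, M.Adj (Sum.inl a) (Sum.inl b)}
      Adj := fun a b => M.Adj (Sum.inl a) (Sum.inl b)
      adj_sub := fun h => coneGraph_adj_inl_inl.mp h.adj_sub
      edge_vert := fun h => ⟨_, h⟩
      symm := ⟨fun _ _ h => h.symm⟩ }
  refine ⟨N, fun a ⟨b, hab⟩ =>
    ⟨b, hab, fun c hac => Sum.inl_injective ((hM (Sum.inl a)).unique hac hab)⟩, ?_⟩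
  have hpartner (a : ↥N.vertsᶜ) : ∃ e, M.Adj (Sum.inl a.1) (Sum.inr e) := by
    obtain ⟨b | e, h, -⟩ := hM (Sum.inl a.1)
    · exact absurd ⟨b, h⟩ a.2
    · exact ⟨e, h⟩
  choose partner hpartner using hpartner
  have hinj : Function.Injective partner := fun a a' h => Subtype.ext <| Sum.inl_injective <|
    (hM (Sum.inr (partner a))).unique (hpartner a).symm (h ▸ (hpartner a').symm)
  have hcompl := Nat.card_le_card_of_injective partner hinj
  rw [Nat.card_coe_set_eq, Nat.card_fin] at hcompl
  rw [← Set.ncard_add_ncard_compl N.verts]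
  omega

end Cone

theorem HasBipartiteNonNbrs.exists_isMatching [Fintype V] (hG : HasBipartiteNonNbrs G) {t : ℕ}
    (ht : 2 * t ≤ Fintype.card V) (hcov : ∀ C, IsVertexCover G C → t ≤ C.card) :
    ∃ M : G.Subgraph, M.IsMatching ∧ 2 * t ≤ M.verts.ncard := by
  set d := Fintype.card V - 2 * t
  have hcard : Fintype.card (V ⊕ Fin d) = Fintype.card V + d := by simp
  obtain ⟨M, hM⟩ := (hG.coneGraph d).exists_isPerfectMatching
    (by rw [hcard, Nat.even_iff]; omega)
    (fun D hD => by have := hD.min_le_card_of_coneGraph hcov; omega)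
  obtain ⟨N, hN, hNcard⟩ := exists_isMatching_of_isPerfectMatching_coneGraph hM
  rw [Nat.card_eq_fintype_card] at hNcard
  exact ⟨N, hN, by omega⟩

end Matching

section EdgeIdeal

variable {k V W : Type*} [Field k] {G : SimpleGraph V} {H : SimpleGraph W}

lemma X_mul_X_mem_edgeIdeal {a b : V} (h : G.Adj a b) :
    (X a * X b : MvPolynomial V k) ∈ edgeIdeal k G :=
  Ideal.subset_span ⟨a, b, h, rfl⟩

lemma edgeIdeal_le_comap_rename (φ : G →g H) :
    edgeIdeal k G ≤ (edgeIdeal k H).comap (rename φ) := by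
  rw [edgeIdeal, Ideal.span_le]
  rintro _ ⟨a, b, hab, rfl⟩
  simpa using X_mul_X_mem_edgeIdeal (φ.map_adj hab)

@[to_additive]
lemma prod_verts_eq_prod_edgeSet {N : Type*} [CommMonoid N] {M : G.Subgraph} [Fintype M.verts]
    [Fintype M.edgeSet] (hM : M.IsMatching) (f : V → N) :
    ∏ v : M.verts, f v = ∏ e : M.edgeSet, (e.1.map f).mul := by
  classical
  rw [← Finset.prod_fiberwise Finset.univ hM.toEdge]
  refine Finset.prod_congr rfl ?_
  rintro ⟨⟨u, v⟩, huv⟩ -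
  have huv' : M.Adj u v := huv
  have hfiber : Finset.univ.filter (fun w => hM.toEdge w = ⟨s(u, v), huv⟩)
      = {⟨u, M.edge_vert huv'⟩, ⟨v, M.edge_vert huv'.symm⟩} := by
    rw [← Finset.coe_inj, Finset.coe_pair, ← hM.toEdge_preimage_singleton huv']
    ext w
    simp
  have hne : (⟨u, M.edge_vert huv'⟩ : M.verts) ≠ ⟨v, M.edge_vert huv'.symm⟩ := by
    simpa using huv'.ne
  rw [hfiber, Finset.prod_pair hne]
  rfl

lemma card_verts_eq_two_mul_card_edgeSet {M : G.Subgraph} [Fintype M.verts] [Fintype M.edgeSet]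
    (hM : M.IsMatching) : Fintype.card M.verts = 2 * Fintype.card M.edgeSet := by
  calc Fintype.card M.verts = ∑ _v : M.verts, 1 := Fintype.card_eq_sum_ones
    _ = ∑ e : M.edgeSet, (e.1.map fun _ => 1).add := sum_verts_eq_sum_edgeSet hM fun _ => 1
    _ = ∑ _e : M.edgeSet, 2 := Finset.sum_congr rfl fun ⟨e, _⟩ _ => by
        induction e with | _ a b => rfl
    _ = 2 * Fintype.card M.edgeSet := by
        rw [Finset.sum_const, Finset.card_univ, smul_eq_mul, mul_comm]

lemma prod_X_mem_edgeIdeal_pow [Fintype V] {M : G.Subgraph} (hM : M.IsMatching) {t : ℕ}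
    (ht : 2 * t ≤ M.verts.ncard) : ∏ v, (X v : MvPolynomial V k) ∈ edgeIdeal k G ^ t := by
  classical
  have := Fintype.ofFinite M.edgeSet
  rw [← Fintype.prod_subtype_mul_prod_subtype (· ∈ M.verts)]
  refine Ideal.mul_mem_right _ _ ?_
  rw [prod_verts_eq_prod_edgeSet hM X]
  have hcard : t ≤ Fintype.card M.edgeSet := by
    rw [← Nat.card_coe_set_eq, Nat.card_eq_fintype_card,
      card_verts_eq_two_mul_card_edgeSet hM] at ht
    omega
  refine Ideal.pow_le_pow_right hcard ?_
  rw [← Finset.card_univ, ← Finset.prod_const]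
  refine Ideal.prod_mem_prod fun ⟨e, he⟩ _ => ?_
  induction e with | _ a b => exact X_mul_X_mem_edgeIdeal (M.adj_sub he)

theorem HasBipartiteNonNbrs.prod_X_pow_mem_edgeIdeal_pow [Fintype V]
    (hG : HasBipartiteNonNbrs G) {m : V → ℕ} {t : ℕ} (ht : 2 * t ≤ ∑ i, m i)
    (hcov : ∀ C, IsVertexCover G C → t ≤ ∑ i ∈ C, m i) :
    ∏ i, (X i : MvPolynomial V k) ^ m i ∈ edgeIdeal k G ^ t := by
  classical
  -- Polarization: replace each vertex `i` by `m i` twins, which makes the monomial squarefree.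
  let B := Σ i, Fin (m i)
  let K : SimpleGraph B := G.comap Sigma.fst
  let φ : K →g G := ⟨Sigma.fst, fun h => h⟩
  have hcovK (D : Finset B) (hD : IsVertexCover K D) : t ≤ D.card := by
    let C : Finset V := {i | ∀ e, (⟨i, e⟩ : B) ∈ D}
    have hC : IsVertexCover G C := by
      intro a b hab
      by_contra! h
      simp only [C, Finset.mem_filter, Finset.mem_univ, true_and, not_forall] at h
      obtain ⟨⟨e, he⟩, ⟨e', he'⟩⟩ := h
      exact (hD (a := ⟨a, e⟩) (b := ⟨b, e'⟩) hab).elim he he'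
    calc t ≤ ∑ i ∈ C, m i := hcov C hC
      _ = (C.sigma fun _ => Finset.univ).card := by simp
      _ ≤ D.card := Finset.card_le_card fun ⟨i, e⟩ he => by
        simp only [C, Finset.mem_sigma, Finset.mem_filter] at he
        exact he.1.2 e
  obtain ⟨M, hM, hMcard⟩ := (hG.comap Sigma.fst).exists_isMatching (by simpa using ht) hcovK
  have hmem : ∏ b, X b ∈ (edgeIdeal k G ^ t).comap (rename φ) :=
    Ideal.le_comap_pow _ t
      (Ideal.pow_right_mono (edgeIdeal_le_comap_rename φ) t (prod_X_mem_edgeIdeal_pow hM hMcard))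
  have hrename : rename φ (∏ b : B, X b) = ∏ i, (X i : MvPolynomial V k) ^ m i := by
    have hφ (b : B) : φ b = b.1 := rfl
    simp only [map_prod, rename_X, hφ]
    rw [Fintype.prod_sigma]
    simp
  rwa [Ideal.mem_comap, hrename] at hmem

lemma le_sum_of_mem_coverPrime_pow {C : Finset V} {s : ℕ} {p : MvPolynomial V k}
    (hp : p ∈ coverPrime k C ^ s) {m : V →₀ ℕ} (hm : m ∈ p.support) : s ≤ ∑ i ∈ C, m i := by
  classical
  induction s generalizing p m with
  | zero => exact Nat.zero_le _
  | succ s ih =>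
    rw [pow_succ] at hp
    induction hp using Submodule.mul_induction_on' generalizing m with
    | mem_mul_mem a ha b hb =>
      obtain ⟨x, hx, y, hy, rfl⟩ := Finset.mem_add.mp (support_mul a b hm)
      obtain ⟨i, hi, hyi⟩ := mem_ideal_span_X_image.mp hb y hy
      have hyC : y i ≤ ∑ j ∈ C, y j := Finset.single_le_sum (fun _ _ => Nat.zero_le _) hi
      have hxC := ih ha hx
      simp only [Finsupp.add_apply, Finset.sum_add_distrib]
      omega
    | add a _ b _ iha ihb => exact (Finset.mem_union.mp (support_add hm)).elim iha ihb

lemma IsVertexCover.exists_isMinVertexCover_subset {C : Finset V} (hC : IsVertexCover G C) :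
    ∃ D ⊆ C, IsMinVertexCover G D := by
  obtain ⟨D, hDC, hD⟩ := exists_minimal_le_of_wellFoundedLT (IsVertexCover G) C hC
  exact ⟨D, hDC, hD.prop, fun E hED hE => hD.eq_of_le hE hED⟩

lemma le_sum_of_mem_symbPow {s : ℕ} {p : MvPolynomial V k} (hp : p ∈ symbPow k G s)
    {m : V →₀ ℕ} (hm : m ∈ p.support) {C : Finset V} (hC : IsVertexCover G C) :
    s ≤ ∑ i ∈ C, m i := by
  obtain ⟨D, hDC, hD⟩ := hC.exists_isMinVertexCover_subset
  simp only [symbPow, Ideal.mem_iInf] at hp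
  exact (le_sum_of_mem_coverPrime_pow (hp D hD) hm).trans (Finset.sum_le_sum_of_subset hDC)

theorem HasBipartiteNonNbrs.mem_edgeIdeal_pow_of_mem_symbPow [Fintype V]
    (hG : HasBipartiteNonNbrs G) {s t : ℕ} (hts : t ≤ s) {p : MvPolynomial V k}
    (hp : p ∈ symbPow k G s) (hdeg : ∀ m ∈ p.support, 2 * t ≤ ∑ i, m i) :
    p ∈ edgeIdeal k G ^ t := by
  rw [p.as_sum]
  refine Ideal.sum_mem _ fun m hm => ?_
  rw [monomial_eq, Finsupp.prod_fintype _ _ fun _ => pow_zero _]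
  exact Ideal.mul_mem_left _ _ <| hG.prod_X_pow_mem_edgeIdeal_pow (hdeg m hm)
    fun C hC => hts.trans (le_sum_of_mem_symbPow hp hm hC)

end EdgeIdeal

section Cyclic

variable {n r : ℕ} [NeZero n]

lemma Gnr_adj_iff {a b : ZMod n} :
    (Gnr n r).Adj a b ↔ r + 1 ≤ (a - b).val ∧ (a - b).val + (r + 1) ≤ n := by
  have ha := a.val_lt
  have hb := b.val_lt
  have hne : a ≠ b ↔ a.val ≠ b.val := (ZMod.val_injective n).ne_iff.symm
  rw [Gnr, SimpleGraph.fromRel_adj, hne]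
  rcases lt_trichotomy a.val b.val with hlt | heq | hgt
  · have : NeZero (b - a) := ⟨sub_ne_zero.mpr (hne.mpr hlt.ne).symm⟩
    rw [← neg_sub b a, ZMod.val_neg_of_ne_zero, ZMod.val_sub hlt.le]
    omega
  · simp [ZMod.val_injective n heq]
  · rw [ZMod.val_sub hgt.le]
    omega

lemma Gnr_adj_iff_of_val_sub_le {x y v : ZMod n} (h : (y - v).val ≤ (x - v).val) :
    (Gnr n r).Adj x y ↔
      r + 1 ≤ (x - v).val - (y - v).val ∧ (x - v).val - (y - v).val + (r + 1) ≤ n := by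
  rw [Gnr_adj_iff, ← sub_sub_sub_cancel_right x y v, ZMod.val_sub h]

lemma hasBipartiteNonNbrs_Gnr : HasBipartiteNonNbrs (Gnr n r) := by
  intro v
  -- The non-neighbours of `v` are within `r` steps after it or within `r` steps before it.
  let col (x : ZMod n) : Fin 2 := if (x - v).val ≤ r then 0 else 1
  have hcol {x y : ZMod n} (hx : ¬ (Gnr n r).Adj v x) (hy : ¬ (Gnr n r).Adj v y)
      (hxy : (Gnr n r).Adj x y) (hle : (y - v).val ≤ (x - v).val) : col x ≠ col y := by
    rw [SimpleGraph.adj_comm, Gnr_adj_iff] at hx hy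
    rw [Gnr_adj_iff_of_val_sub_le hle] at hxy
    have := (x - v).val_lt
    simp only [col]
    grind
  refine ⟨SimpleGraph.Coloring.mk (fun x => col x) fun {x y} hxy => ?_⟩
  rcases le_total (y.1 - v).val (x.1 - v).val with h | h
  · exact hcol x.2 y.2 hxy h
  · exact (hcol y.2 x.2 hxy.symm h).symm

/-- The vertices of `ZMod n` outside the arc `v, v + 1, …, v + r` of `r + 1` consecutive vertices.
These covers of `G_{n,r}` are the ones averaged over in the bound on `α(I^{(s)})`. -/
def arcCompl (r : ℕ) (v : ZMod n) : Finset (ZMod n) :=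
  {x | r + 1 ≤ (x - v).val}

lemma mem_arcCompl {v x : ZMod n} : x ∈ arcCompl r v ↔ r + 1 ≤ (x - v).val := by
  simp [arcCompl]

lemma isVertexCover_arcCompl (v : ZMod n) : IsVertexCover (Gnr n r) (arcCompl r v) := by
  intro x y hxy
  rw [mem_arcCompl, mem_arcCompl]
  rcases le_total (y - v).val (x - v).val with h | h
  · rw [Gnr_adj_iff_of_val_sub_le h] at hxy
    omega
  · rw [SimpleGraph.adj_comm, Gnr_adj_iff_of_val_sub_le h] at hxy
    omega

lemma card_filter_mem_arcCompl (x : ZMod n) :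
    (Finset.univ.filter (x ∈ arcCompl r ·)).card = n - (r + 1) := by
  rw [← Nat.card_Ico (r + 1) n]
  refine Finset.card_nbij' (fun v => (x - v).val) (fun j => x - (j : ZMod n)) ?_ ?_ ?_ ?_
  · intro v hv
    simpa [mem_arcCompl, ZMod.val_lt] using hv
  · intro j hj
    rw [Finset.coe_Ico, Set.mem_Ico] at hj
    simpa [mem_arcCompl, Nat.mod_eq_of_lt hj.2] using hj.1
  · intro v _
    simp
  · intro j hj
    rw [Finset.coe_Ico, Set.mem_Ico] at hj
    simpa using Nat.mod_eq_of_lt hj.2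

lemma mul_le_mul_sum_of_isVertexCover_Gnr {m : ZMod n → ℕ} {s : ℕ}
    (hcov : ∀ C, IsVertexCover (Gnr n r) C → s ≤ ∑ i ∈ C, m i) :
    n * s ≤ (n - (r + 1)) * ∑ i, m i := by
  calc n * s = ∑ _v : ZMod n, s := by simp [ZMod.card]
    _ ≤ ∑ v, ∑ x ∈ arcCompl r v, m x :=
        Finset.sum_le_sum fun v _ => hcov _ (isVertexCover_arcCompl v)
    _ = ∑ x, ∑ v with x ∈ arcCompl r v, m x := Finset.sum_comm' (by simp)
    _ = (n - (r + 1)) * ∑ i, m i := by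
        simp_rw [Finset.sum_const, card_filter_mem_arcCompl, smul_eq_mul, Finset.mul_sum]

theorem symbPow_Gnr_le_edgeIdeal_pow {k : Type*} [Field k] {s t : ℕ} (hr : 2 * (r + 1) ≤ n)
    (hst : 2 * (n - (r + 1)) * t ≤ n * s) :
    symbPow k (Gnr n r) s ≤ edgeIdeal k (Gnr n r) ^ t := by
  have hts : t ≤ s := by
    refine Nat.le_of_mul_le_mul_left ((Nat.mul_le_mul_right t ?_).trans hst) (NeZero.pos n)
    omega
  refine fun p hp => hasBipartiteNonNbrs_Gnr.mem_edgeIdeal_pow_of_mem_symbPow hts hp fun m hm => ?_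
  refine Nat.le_of_mul_le_mul_left (c := n - (r + 1)) ?_ (by omega)
  calc (n - (r + 1)) * (2 * t) = 2 * (n - (r + 1)) * t := by ring
    _ ≤ n * s := hst
    _ ≤ (n - (r + 1)) * ∑ i, m i :=
        mul_le_mul_sum_of_isVertexCover_Gnr fun C hC => le_sum_of_mem_symbPow hp hm hC

theorem div_lt_of_not_symbPow_Gnr_le {k : Type*} [Field k] {s t : ℕ} (hr : 2 * (r + 1) ≤ n)
    (ht : 0 < t) (h : ¬ symbPow k (Gnr n r) s ≤ edgeIdeal k (Gnr n r) ^ t) :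
    (s : ℝ) / t < 2 * ((n : ℝ) - (r + 1)) / n := by
  have hlt : n * s < 2 * (n - (r + 1)) * t := by
    contrapose! h
    exact symbPow_Gnr_le_edgeIdeal_pow hr h
  have hn : (0 : ℝ) < n := by exact_mod_cast NeZero.pos n
  rw [div_lt_div_iff₀ (by exact_mod_cast ht) hn, mul_comm]
  have hcast : ((n - (r + 1) : ℕ) : ℝ) = n - (r + 1) := by
    rw [Nat.cast_sub (by omega)]
    push_cast
    rfl
  rw [← hcast]
  exact_mod_cast hlt

end Cyclic

/-- For `I = I(G_{n,r})`, if `I^{(s)} ⊄ I^t` (with `s,t ≥ 1`) then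
`s/t < 2(n-(r+1))/n`; consequently the resurgence
`ρ(I) = sup{s/t : I^{(s)} ⊄ I^t}` satisfies `ρ(I) ≤ 2(n-(r+1))/n`. -/
theorem stmt15 {k : Type*} [Field k] (n r : ℕ) (hn : 2 ≤ n) (hr : r ≤ n / 2 - 1) :
    (∀ s t : ℕ, 0 < s → 0 < t →
      ¬ (symbPow k (Gnr n r) s ≤ (edgeIdeal k (Gnr n r)) ^ t) →
      (s : ℝ) / t < 2 * ((n : ℝ) - (r + 1)) / n) ∧
    sSup {x : ℝ | ∃ s t : ℕ, 0 < s ∧ 0 < t ∧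
        ¬ (symbPow k (Gnr n r) s ≤ (edgeIdeal k (Gnr n r)) ^ t) ∧ x = (s : ℝ) / t} ≤
      2 * ((n : ℝ) - (r + 1)) / n := by
  have : NeZero n := ⟨by omega⟩
  have hr' : 2 * (r + 1) ≤ n := by omega
  refine ⟨fun s t _ ht h => div_lt_of_not_symbPow_Gnr_le hr' ht h, Real.sSup_le ?_ ?_⟩
  · rintro _ ⟨s, t, -, ht, h, rfl⟩
    exact (div_lt_of_not_symbPow_Gnr_le hr' ht h).le
  · have : (r + 1 : ℝ) ≤ n := by exact_mod_cast (by omega : r + 1 ≤ n)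
    have := sub_nonneg.mpr this
    positivity
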